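/- (Equilibrium distribution along the characteristic curve) Let $\pi$ be a family $(\pi_{\mathbf{j}})_{\mathbf{j}\in\mathbb{Z}_+^n}$ of positive numbers summing to 1 satisfying, for $s\in[0,1)$, the equation $H(s,u_2(s),\dots,u_n(s))\pi_{\mathbf{0}}+A(s,u_2(s),\dots,u_n(s))\sum_{\mathbf{j}\ne\mathbf{0}}\pi_{\mathbf{j}}s^{j_1}u_2(s)^{j_2}\cdots u_n(s)^{j_n}+\sum_{k=1}^n B_k(s,u_2(s),\dots,u_n(s))\sum_{\mathbf{j}\ne\mathbf{0}}\pi_{\mathbf{j}}j_k s^{j_1}\cdots u_k(s)^{j_k-1}\cdots u_n(s)^{j_n}=0$. Then $\pi(s):=\sum_{\mathbf{j}}\pi_{\mathbf{j}}s^{j_1}u_2(s)^{j_2}\cdots u_n(s)^{j_n}$ satisfies $\pi(s)=\pi_{\mathbf{0}}\Big[1+\int_0^s \frac{-H(y,u_2(y),\dots,u_n(y))}{B_1(y,u_2(y),\dots,u_n(y))}\,e^{-\int_y^s \frac{A(x,u_2(x),\dots,u_n(x))}{B_1(x,u_2(x),\dots,u_n(x))}dx}\,dy\Big]$ for $s\in[0,1)$.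 -/

import Mathlib

open Filter Topology Set

noncomputable def gen {n : ℕ} (a : (Fin n → ℕ) → ℝ) (u : Fin n → ℝ) : ℝ :=
  ∑' j : Fin n → ℕ, a j * ∏ l, u l ^ j l

def unitvec {n : ℕ} (k : Fin n) : Fin n → ℕ := fun l => if l = k then 1 else 0

/-!
The curve starts at the origin and moves with velocity `B_k / B_1`. Since
`|B_k(u) + q_k u_k| ≤ q_k` on the closed unit polydisc, where `q_k` is the rate at which a particle
of type `k` branches, the velocity points inwards strongly enough that Gronwall's inequality keeps
the curve in the open polydisc. There `π` may be differentiated termwise, and the stationary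
equation becomes the scalar linear equation `(π - π_0)' = -(A / B_1) (π - π_0) - π_0 H / B_1`,
solved by variation of constants. The endpoint `s = 0` is not singular: if `B_1` vanished at the
origin, the stationary equation would force some `B_k(0) ≠ 0`, and `u_k' = B_k / B_1` would blow up.
-/

section Calculus

theorem bddAbove_range_nat_mul_pow_pred {r : ℝ} (hr0 : 0 ≤ r) (hr : r < 1) :
    BddAbove (range fun m : ℕ => (m : ℝ) * r ^ (m - 1)) := by
  have hlim := (tendsto_self_mul_const_pow_of_lt_one hr0 hr).add
    (tendsto_pow_atTop_nhds_zero_of_lt_one hr0 hr)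
  refine ((tendsto_add_atTop_iff_nat 1).1 (hlim.congr fun m => ?_)).bddAbove_range
  rw [Nat.cast_succ, add_tsub_cancel_right, add_one_mul]

theorem lt_of_continuousOn_Icc_of_forall_le {α β : Type*} [ConditionallyCompleteLinearOrder α]
    [TopologicalSpace α] [OrderTopology α] [DenselyOrdered α] [LinearOrder β]
    [TopologicalSpace β] [OrderClosedTopology β] {φ : α → β} {a b : α} {r : β} (hab : a ≤ b)
    (hφ : ContinuousOn φ (Icc a b)) (ha : φ a < r)
    (hstep : ∀ t ∈ Ioc a b, (∀ s ∈ Icc a t, φ s ≤ r) → φ t < r) : φ b < r := by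
  by_contra! hb
  have hcompact : IsCompact (Icc a b ∩ φ ⁻¹' Ici r) :=
    isCompact_Icc.of_isClosed_subset (hφ.preimage_isClosed_of_isClosed isClosed_Icc isClosed_Ici)
      inter_subset_left
  obtain ⟨t, ⟨ht, hrt⟩, ht_least⟩ := hcompact.exists_isLeast ⟨b, right_mem_Icc.2 hab, hb⟩
  have hat : a ≠ t := fun h => (h ▸ ha).not_ge hrt
  have hbefore : ∀ s ∈ Ico a t, φ s ≤ r := fun s hs => le_of_not_ge fun hrs =>
    hs.2.not_ge (ht_least ⟨⟨hs.1, hs.2.le.trans ht.2⟩, hrs⟩)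
  have hclosure : closure (Ico a t) = Icc a t := closure_Ico hat
  refine (hstep t ⟨ht.1.lt_of_ne hat, ht.2⟩ fun s hs => ?_).not_ge hrt
  exact ((hφ s ⟨hs.1, hs.2.trans ht.2⟩).mono
    (Ico_subset_Icc_self.trans (Icc_subset_Icc_right ht.2))).closure_le
    (hclosure.symm ▸ hs) continuousWithinAt_const hbefore

variable {E : Type*} [NormedAddCommGroup E] [NormedSpace ℝ E]

theorem norm_lt_of_norm_deriv_add_smul_le {f f' : ℝ → E} {a b M R : ℝ} (hab : a ≤ b)
    (hf : ContinuousOn f (Icc a b)) (hf' : ∀ x ∈ Ico a b, HasDerivWithinAt f (f' x) (Ici x) x)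
    (ha : ‖f a‖ < R) (hbound : ∀ x ∈ Ico a b, ‖f' x + M • f x‖ ≤ M * R) : ‖f b‖ < R := by
  have hexp : ∀ x, HasDerivAt (fun x => Real.exp (M * (x - a))) (Real.exp (M * (x - a)) * M) x :=
    fun x => by simpa using (((hasDerivAt_id x).sub_const a).const_mul M).exp
  have hgrowth := image_norm_le_of_norm_deriv_right_le_deriv_boundary
    (f := fun x => Real.exp (M * (x - a)) • f x)
    (f' := fun x => Real.exp (M * (x - a)) • (f' x + M • f x))
    (B := fun x => Real.exp (M * (x - a)) * R - (R - ‖f a‖))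
    (B' := fun x => Real.exp (M * (x - a)) * M * R)
    (ContinuousOn.smul (by fun_prop) hf)
    (fun x hx => ((hexp x).hasDerivWithinAt.smul (hf' x hx)).congr_deriv
      (by rw [smul_add, mul_smul]))
    (by simp) (fun x => ((hexp x).mul_const R).sub_const _)
    (fun x hx => by
      rw [norm_smul, Real.norm_of_nonneg (Real.exp_pos _).le, mul_assoc]
      exact mul_le_mul_of_nonneg_left (hbound x hx) (Real.exp_pos _).le)
    (right_mem_Icc.2 hab)
  rw [norm_smul, Real.norm_of_nonneg (Real.exp_pos _).le] at hgrowth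
  exact lt_of_mul_lt_mul_left (by linarith) (Real.exp_pos (M * (b - a))).le

theorem eq_add_integral_of_hasDerivAt_sub_smul [CompleteSpace E] {α : ℝ → ℝ} {η f : ℝ → E}
    {a b : ℝ} (hab : a ≤ b) (hα : ContinuousOn α (Icc a b)) (hη : ContinuousOn η (Icc a b))
    (hf : ContinuousOn f (Icc a b))
    (hf' : ∀ y ∈ Ioo a b, HasDerivAt f (η y - α y • f y) y) :
    f b = Real.exp (-∫ x in a..b, α x) • f a +
      ∫ y in a..b, Real.exp (-∫ x in y..b, α x) • η y := by
  have hexp : ContinuousOn (fun y => Real.exp (-∫ x in y..b, α x)) (Icc a b) := by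
    have hint := intervalIntegral.continuousOn_primitive_interval_left (f := α) (a := a) (b := b)
      (μ := MeasureTheory.volume) (uIcc_of_le hab ▸ hα.integrableOn_Icc)
    exact (uIcc_of_le hab ▸ hint).neg.rexp
  have hexp' : ∀ y ∈ Ioo a b, HasDerivAt (fun y => Real.exp (-∫ x in y..b, α x))
      (Real.exp (-∫ x in y..b, α x) * α y) y := fun y hy => by
    have hint : HasDerivAt (fun y => ∫ x in y..b, α x) (-α y) y :=
      intervalIntegral.integral_hasDerivAt_left
        ((hα.mono (Icc_subset_Icc_left hy.1.le)).intervalIntegrable_of_Icc hy.2.le)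
        ((hα.mono Ioo_subset_Icc_self).stronglyMeasurableAtFilter isOpen_Ioo y hy)
        (hα.continuousAt (Icc_mem_nhds hy.1 hy.2))
    simpa using hint.fun_neg.exp
  have hFTC := intervalIntegral.integral_eq_sub_of_hasDerivAt_of_le hab (hexp.smul hf)
    (fun y hy => ((hexp' y hy).smul (hf' y hy)).congr_deriv
      (show _ = Real.exp (-∫ x in y..b, α x) • η y by
        rw [smul_sub, mul_smul, sub_add_cancel]))
    ((hexp.smul hη).intervalIntegrable_of_Icc hab)
  rw [hFTC]
  simp

theorem not_differentiableWithinAt_Ioi_of_deriv_eq_div {f φ ψ : ℝ → ℝ} {a C : ℝ}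
    (hφ : Tendsto φ (𝓝[>] a) (𝓝 C)) (hC : C ≠ 0) (hψ : Tendsto ψ (𝓝[>] a) (𝓝[>] 0))
    (hf : deriv f =ᶠ[𝓝[>] a] fun x => φ x / ψ x) : ¬ DifferentiableWithinAt ℝ f (Ioi a) a := by
  simp only [div_eq_mul_inv] at hf
  rcases hC.lt_or_gt with hneg | hpos
  · exact not_differentiableWithinAt_of_deriv_tendsto_atBot_Ioi f
      ((tendsto_congr' hf).2 (hφ.neg_mul_atTop hneg hψ.inv_tendsto_nhdsGT_zero))
  · exact not_differentiableWithinAt_of_deriv_tendsto_atTop_Ioi f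
      ((tendsto_congr' hf).2 (hφ.pos_mul_atTop hpos hψ.inv_tendsto_nhdsGT_zero))

theorem abs_div_add_div_mul_le {x y q β m : ℝ} (hx : |x + q * y| ≤ q) (hy : |y| ≤ 1)
    (hm : 0 < m) (hmβ : m ≤ β) : |x / β + q / m * y| ≤ q / m := by
  have hβ : 0 < β := hm.trans_le hmβ
  have hq : 0 ≤ q := (abs_nonneg _).trans hx
  have hqβ : 0 ≤ q / m - q / β := sub_nonneg.2 (div_le_div_of_nonneg_left hq hm hmβ)
  calc |x / β + q / m * y| = |(x + q * y) / β + (q / m - q / β) * y| := by ring_nf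
    _ ≤ |x + q * y| / β + (q / m - q / β) * |y| := by
      refine (abs_add_le _ _).trans_eq ?_
      rw [abs_div, abs_mul, abs_of_pos hβ, abs_of_nonneg hqβ]
    _ ≤ q / β + (q / m - q / β) * 1 := by gcongr
    _ = q / m := by ring

end Calculus

section Monomial

variable {ι : Type*} [Fintype ι] {u : ι → ℝ}

theorem norm_prod_pow_le_one (hu : ‖u‖ ≤ 1) (j : ι → ℕ) : ‖∏ l, u l ^ j l‖ ≤ 1 := by
  simp only [norm_prod, norm_pow]
  exact Finset.prod_le_one (fun _ _ => by positivity) fun l _ =>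
    pow_le_one₀ (norm_nonneg _) ((norm_le_pi_norm u l).trans hu)

theorem prod_zero_pow_eq_zero {j : ι → ℕ} (hj : j ≠ 0) : ∏ l, (0 : ι → ℝ) l ^ j l = 0 := by
  obtain ⟨l, hl⟩ := Function.ne_iff.mp hj
  exact Finset.prod_eq_zero (Finset.mem_univ l) (zero_pow hl)

theorem norm_mul_prod_pow_le (hu : ‖u‖ ≤ 1) (x : ℝ) (j : ι → ℕ) :
    ‖x * ∏ l, u l ^ j l‖ ≤ ‖x‖ := by
  rw [norm_mul]
  exact mul_le_of_le_one_right (norm_nonneg x) (norm_prod_pow_le_one hu j)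

end Monomial

section GeneratingFunction

variable {n : ℕ} {p : (Fin n → ℕ) → ℝ} {u : Fin n → ℝ}

theorem summable_gen (hp : Summable p) (hu : ‖u‖ ≤ 1) :
    Summable fun j : Fin n → ℕ => p j * ∏ l, u l ^ j l :=
  .of_norm_bounded hp.norm fun j => norm_mul_prod_pow_le hu (p j) j

theorem continuousOn_gen (hp : Summable p) :
    ContinuousOn (gen p) (Metric.closedBall 0 1) :=
  continuousOn_tsum (fun j => by fun_prop) hp.norm fun j _ hu =>
    norm_mul_prod_pow_le (mem_closedBall_zero_iff.1 hu) (p j) j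

theorem gen_zero (p : (Fin n → ℕ) → ℝ) : gen p 0 = p 0 := by
  rw [gen, tsum_eq_single 0 fun j hj => by rw [prod_zero_pow_eq_zero hj, mul_zero]]
  simp

theorem gen_eq_add_tsum_ne (hp : Summable p) (hu : ‖u‖ ≤ 1) (e : Fin n → ℕ) :
    gen p u = p e * ∏ l, u l ^ e l +
      ∑' j : {j : Fin n → ℕ // j ≠ e}, p j.1 * ∏ l, u l ^ j.1 l := by
  have hsplit := (summable_gen hp hu).tsum_subtype_add_tsum_subtype_compl {e}
  rw [tsum_singleton e (fun j : Fin n → ℕ => p j * ∏ l, u l ^ j l)] at hsplit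
  exact hsplit.symm

theorem tsum_ne_zero_eq_gen_sub (hp : Summable p) (hu : ‖u‖ ≤ 1) :
    ∑' j : {j : Fin n → ℕ // j ≠ 0}, p j.1 * ∏ l, u l ^ j.1 l = gen p u - p 0 := by
  simp [gen_eq_add_tsum_ne hp hu 0]

theorem abs_gen_sub_le (hp : Summable p) (hu : ‖u‖ ≤ 1) (e : Fin n → ℕ) :
    |gen p u - p e * ∏ l, u l ^ e l| ≤ ∑' j : {j : Fin n → ℕ // j ≠ e}, |p j.1| := by
  rw [gen_eq_add_tsum_ne hp hu e, add_sub_cancel_left]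
  exact tsum_of_norm_bounded (hp.abs.subtype _).hasSum fun j => norm_mul_prod_pow_le hu _ _

theorem prod_pow_unitvec (u : Fin n → ℝ) (k : Fin n) : ∏ l, u l ^ unitvec k l = u k := by
  simp [unitvec]

theorem prod_pow_sub_unitvec (u : Fin n → ℝ) (j : Fin n → ℕ) (k : Fin n) :
    ∏ l, u l ^ (j - unitvec k) l = u k ^ (j k - 1) * ∏ l ∈ Finset.univ.erase k, u l ^ j l := by
  rw [← Finset.mul_prod_erase _ _ (Finset.mem_univ k)]
  congr 1
  · simp [unitvec]
  · exact Finset.prod_congr rfl fun l hl => by simp [unitvec, Finset.ne_of_mem_erase hl]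

/-- The termwise partial derivative `∂_k` of `gen p`. The exponent `j k - 1` is truncated at
`j k = 0`, where the factor `j k` makes the term vanish. -/
noncomputable def genPartial (k : Fin n) (p : (Fin n → ℕ) → ℝ) (u : Fin n → ℝ) : ℝ :=
  ∑' j : Fin n → ℕ, p j * (j k : ℝ) * ∏ l, u l ^ (j - unitvec k) l

theorem hasFDerivAt_prod_pow (j : Fin n → ℕ) (u : Fin n → ℝ) :
    HasFDerivAt (fun u : Fin n → ℝ => ∏ l, u l ^ j l)
      (∑ k, ((j k : ℝ) * ∏ l, u l ^ (j - unitvec k) l) •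
        ContinuousLinearMap.proj (R := ℝ) (φ := fun _ : Fin n => ℝ) k) u := by
  refine (HasFDerivAt.finsetProd fun k _ => (hasFDerivAt_apply k u).pow (j k)).congr_fderiv ?_
  refine Finset.sum_congr rfl fun k _ => ?_
  rw [prod_pow_sub_unitvec, smul_smul, nsmul_eq_mul]
  congr 1
  ring

theorem norm_prod_pow_sub_unitvec_le {r : ℝ} (hr : r ≤ 1) (hu : ‖u‖ ≤ r) (j : Fin n → ℕ)
    (k : Fin n) : ‖∏ l, u l ^ (j - unitvec k) l‖ ≤ r ^ (j k - 1) := by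
  have hle : ∀ l, ‖u l‖ ≤ r := fun l => (norm_le_pi_norm u l).trans hu
  rw [prod_pow_sub_unitvec, norm_mul, norm_pow, norm_prod]
  refine (mul_le_of_le_one_right (by positivity) ?_).trans
    (pow_le_pow_left₀ (norm_nonneg _) (hle k) _)
  refine Finset.prod_le_one (fun _ _ => norm_nonneg _) fun l _ => ?_
  rw [norm_pow]
  exact pow_le_one₀ (norm_nonneg _) ((hle l).trans hr)

theorem exists_norm_genPartial_term_le {r : ℝ} (hr0 : 0 ≤ r) (hr : r < 1) :
    ∃ C, ∀ u : Fin n → ℝ, ‖u‖ ≤ r → ∀ (j : Fin n → ℕ) (k : Fin n),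
      ‖(j k : ℝ) * ∏ l, u l ^ (j - unitvec k) l‖ ≤ C := by
  obtain ⟨C, hC⟩ := bddAbove_range_nat_mul_pow_pred hr0 hr
  refine ⟨C, fun u hu j k => le_trans ?_ (hC ⟨j k, rfl⟩)⟩
  rw [norm_mul, Real.norm_natCast]
  exact mul_le_mul_of_nonneg_left (norm_prod_pow_sub_unitvec_le hr.le hu j k) (Nat.cast_nonneg _)

theorem summable_genPartial (hp : Summable p) (hu : ‖u‖ < 1) (k : Fin n) :
    Summable fun j : Fin n → ℕ => p j * (j k : ℝ) * ∏ l, u l ^ (j - unitvec k) l := by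
  obtain ⟨C, hC⟩ := exists_norm_genPartial_term_le (n := n) (norm_nonneg u) hu
  refine .of_norm_bounded (hp.abs.mul_right C) fun j => ?_
  rw [mul_assoc, norm_mul]
  exact mul_le_mul_of_nonneg_left (hC u le_rfl j k) (abs_nonneg _)

theorem hasFDerivAt_gen (hp : Summable p) (hu : ‖u‖ < 1) :
    HasFDerivAt (gen p) (∑ k, genPartial k p u •
      ContinuousLinearMap.proj (R := ℝ) (φ := fun _ : Fin n => ℝ) k) u := by
  obtain ⟨r, hur, hr⟩ := exists_between hu
  obtain ⟨C, hC⟩ := exists_norm_genPartial_term_le (n := n) ((norm_nonneg u).trans hur.le) hr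
  have hu_mem : u ∈ Metric.ball 0 r := mem_ball_zero_iff.2 hur
  have hseries := hasFDerivAt_tsum_of_isPreconnected
    (hp.abs.mul_right (∑ k, C * ‖ContinuousLinearMap.proj (R := ℝ) (φ := fun _ : Fin n => ℝ) k‖))
    Metric.isOpen_ball (convex_ball 0 r).isPreconnected
    (fun j v _ => (hasFDerivAt_prod_pow j v).const_mul (p j))
    (fun j v hv => by
      rw [norm_smul]
      refine mul_le_mul_of_nonneg_left (norm_sum_le_of_le _ fun k _ => ?_) (norm_nonneg _)
      rw [norm_smul]
      exact mul_le_mul_of_nonneg_right (hC v (mem_ball_zero_iff.1 hv).le j k) (norm_nonneg _))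
    hu_mem (summable_gen hp hu.le) hu_mem
  refine hseries.congr_fderiv (HasSum.tsum_eq ?_)
  simp only [Finset.smul_sum, smul_smul, ← mul_assoc]
  exact hasSum_sum fun k _ => (summable_genPartial hp hu k).hasSum.smul_const _

theorem hasDerivAt_gen_comp (hp : Summable p) {c : ℝ → Fin n → ℝ} {v : Fin n → ℝ} {s : ℝ}
    (hcs : ‖c s‖ < 1) (hc : HasDerivAt c v s) :
    HasDerivAt (fun r => gen p (c r)) (∑ k, v k * genPartial k p (c s)) s :=
  ((hasFDerivAt_gen hp hcs).comp_hasDerivAt s hc).congr_deriv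
    (by simp [mul_comm])

theorem abs_gen_add_mul_le (hp : Summable p) {k : Fin n}
    (hdom : ∑' j : {j : Fin n → ℕ // j ≠ unitvec k}, |p j.1| ≤ -p (unitvec k)) (hu : ‖u‖ ≤ 1) :
    |gen p u + -p (unitvec k) * u k| ≤ -p (unitvec k) := by
  rw [neg_mul, ← sub_eq_add_neg]
  simpa only [prod_pow_unitvec] using (abs_gen_sub_le hp hu (unitvec k)).trans hdom

end GeneratingFunction

/-- A characteristic curve `s ↦ (s, u_2(s), …, u_n(s))` on `[0,1)` of the branching rates `b`,
issued from the origin and parametrized by its coordinate `i0`. Nothing is required of `c` outside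
`[0,1)`, so at `0` the coordinate `i0` is only known to be differentiable from the right. -/
structure IsCharacteristicCurve {n : ℕ} (b : Fin n → (Fin n → ℕ) → ℝ) (i0 : Fin n)
    (c : ℝ → Fin n → ℝ) : Prop where
  apply_base : ∀ s ∈ Ico (0 : ℝ) 1, c s i0 = s
  apply_zero_of_ne : ∀ k, k ≠ i0 → c 0 k = 0
  hasDerivAt_of_ne : ∀ s ∈ Ico (0 : ℝ) 1, ∀ k, k ≠ i0 →
    HasDerivAt (fun r => c r k) (gen (b k) (c s) / gen (b i0) (c s)) s
  gen_base_pos : ∀ s ∈ Ioo (0 : ℝ) 1, 0 < gen (b i0) (c s)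

namespace IsCharacteristicCurve

variable {n : ℕ} {b : Fin n → (Fin n → ℕ) → ℝ} {i0 : Fin n} {c : ℝ → Fin n → ℝ}
  {p : (Fin n → ℕ) → ℝ} {s : ℝ}

theorem apply_zero (hc : IsCharacteristicCurve b i0 c) : c 0 = 0 := by
  funext k
  rcases eq_or_ne k i0 with rfl | hk
  · exact hc.apply_base 0 ⟨le_rfl, one_pos⟩
  · exact hc.apply_zero_of_ne k hk

theorem continuousOn (hc : IsCharacteristicCurve b i0 c) : ContinuousOn c (Ico 0 1) := by
  refine continuousOn_pi.2 fun k => ?_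
  rcases eq_or_ne k i0 with rfl | hk
  · exact continuousOn_id.congr hc.apply_base
  · exact fun s hs => (hc.hasDerivAt_of_ne s hs k hk).continuousAt.continuousWithinAt

theorem hasDerivAt (hc : IsCharacteristicCurve b i0 c) (hs : s ∈ Ioo (0 : ℝ) 1) :
    HasDerivAt c (fun k => gen (b k) (c s) / gen (b i0) (c s)) s := by
  refine hasDerivAt_pi.2 fun k => ?_
  rcases eq_or_ne k i0 with rfl | hk
  · rw [div_self (hc.gen_base_pos s hs).ne']
    refine (hasDerivAt_id s).congr_of_eventuallyEq ?_
    filter_upwards [Ioo_mem_nhds hs.1 hs.2] with r hr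
    exact hc.apply_base r (Ioo_subset_Ico_self hr)
  · exact hc.hasDerivAt_of_ne s (Ioo_subset_Ico_self hs) k hk

theorem tendsto_gen (hc : IsCharacteristicCurve b i0 c) (hp : Summable p) :
    Tendsto (fun s => gen p (c s)) (𝓝[>] 0) (𝓝 (gen p 0)) := by
  have hc0 : Tendsto c (𝓝[>] 0) (𝓝 0) := by
    rw [← nhdsWithin_Ioo_eq_nhdsGT one_pos, ← hc.apply_zero]
    exact (hc.continuousOn 0 ⟨le_rfl, one_pos⟩).mono Ioo_subset_Ico_self
  exact ((continuousOn_gen hp).continuousAt (Metric.closedBall_mem_nhds 0 one_pos)).tendsto.comp hc0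

theorem gen_base_zero_pos (hc : IsCharacteristicCurve b i0 c) (hb : ∀ k, Summable (b k))
    {k : Fin n} (hk : gen (b k) 0 ≠ 0) : 0 < gen (b i0) 0 := by
  have hpos : ∀ᶠ s in 𝓝[>] (0 : ℝ), s ∈ Ioo (0 : ℝ) 1 := Ioo_mem_nhdsGT one_pos
  have hnonneg : 0 ≤ gen (b i0) 0 :=
    ge_of_tendsto (hc.tendsto_gen (hb i0)) (hpos.mono fun s hs => (hc.gen_base_pos s hs).le)
  refine hnonneg.lt_of_ne fun hzero => ?_
  have hki0 : k ≠ i0 := fun h => hk (h ▸ hzero.symm)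
  have hbase : Tendsto (fun s => gen (b i0) (c s)) (𝓝[>] 0) (𝓝[>] 0) :=
    tendsto_nhdsWithin_iff.2 ⟨hzero ▸ hc.tendsto_gen (hb i0), hpos.mono hc.gen_base_pos⟩
  refine not_differentiableWithinAt_Ioi_of_deriv_eq_div (f := fun r => c r k)
    (hc.tendsto_gen (hb k)) hk hbase (hpos.mono fun s hs => ?_) ?_
  · exact (hc.hasDerivAt_of_ne s (Ioo_subset_Ico_self hs) k hki0).deriv
  · exact (hc.hasDerivAt_of_ne 0 ⟨le_rfl, one_pos⟩ k
      hki0).differentiableAt.differentiableWithinAt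

theorem gen_base_pos_of_zero (hc : IsCharacteristicCurve b i0 c) (h0 : 0 < gen (b i0) 0)
    (hs : s ∈ Ico (0 : ℝ) 1) : 0 < gen (b i0) (c s) := by
  rcases hs.1.eq_or_lt with rfl | hs0
  · rwa [hc.apply_zero]
  · exact hc.gen_base_pos s ⟨hs0, hs.2⟩

theorem norm_lt_one_of_forall_norm_le_one (hc : IsCharacteristicCurve b i0 c)
    (hb : ∀ k, Summable (b k))
    (hdom : ∀ k, ∑' j : {j : Fin n → ℕ // j ≠ unitvec k}, |b k j.1| ≤ -b k (unitvec k))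
    (h0 : 0 < gen (b i0) 0) (hs : s ∈ Ico (0 : ℝ) 1) (hle : ∀ t ∈ Icc 0 s, ‖c t‖ ≤ 1) :
    ‖c s‖ < 1 := by
  have hsub : Icc 0 s ⊆ Ico 0 1 := Icc_subset_Ico_right hs.2
  have hcont : ContinuousOn c (Icc 0 s) := hc.continuousOn.mono hsub
  obtain ⟨y, hy, hmin⟩ := isCompact_Icc.exists_isMinOn ⟨0, left_mem_Icc.2 hs.1⟩
    ((continuousOn_gen (hb i0)).comp hcont fun t ht => mem_closedBall_zero_iff.2 (hle t ht))
  refine (pi_norm_lt_iff one_pos).2 fun k => ?_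
  rcases eq_or_ne k i0 with rfl | hk
  · rw [hc.apply_base s hs, Real.norm_of_nonneg hs.1]
    exact hs.2
  refine norm_lt_of_norm_deriv_add_smul_le (M := -b k (unitvec k) / gen (b i0) (c y)) hs.1
    (continuousOn_pi.1 hcont k)
    (fun t ht => (hc.hasDerivAt_of_ne t (hsub (Ico_subset_Icc_self ht)) k hk).hasDerivWithinAt)
    (by simp [hc.apply_zero]) fun t ht => ?_
  have ht' := Ico_subset_Icc_self ht
  rw [mul_one]
  exact abs_div_add_div_mul_le (abs_gen_add_mul_le (hb k) (hdom k) (hle t ht'))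
    ((norm_le_pi_norm (c t) k).trans (hle t ht')) (hc.gen_base_pos_of_zero h0 (hsub hy)) (hmin ht')

theorem norm_lt_one (hc : IsCharacteristicCurve b i0 c) (hb : ∀ k, Summable (b k))
    (hdom : ∀ k, ∑' j : {j : Fin n → ℕ // j ≠ unitvec k}, |b k j.1| ≤ -b k (unitvec k))
    (h0 : 0 < gen (b i0) 0) (hs : s ∈ Ico (0 : ℝ) 1) : ‖c s‖ < 1 := by
  refine lt_of_continuousOn_Icc_of_forall_le (φ := fun t => ‖c t‖) hs.1
    (hc.continuousOn.mono (Icc_subset_Ico_right hs.2)).norm (by simp [hc.apply_zero])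
    fun t ht hle => ?_
  exact hc.norm_lt_one_of_forall_norm_le_one hb hdom h0 ⟨ht.1.le, ht.2.trans_lt hs.2⟩ hle

theorem continuousOn_gen_comp (hc : IsCharacteristicCurve b i0 c)
    (hlt : ∀ s ∈ Ico (0 : ℝ) 1, ‖c s‖ < 1) (hp : Summable p) :
    ContinuousOn (fun s => gen p (c s)) (Ico 0 1) :=
  (continuousOn_gen hp).comp hc.continuousOn fun s hs => mem_closedBall_zero_iff.2 (hlt s hs).le

end IsCharacteristicCurve

section StationaryEquation

variable {n : ℕ} {h a π : (Fin n → ℕ) → ℝ} {b : Fin n → (Fin n → ℕ) → ℝ} {S : Fin n → ℝ}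

theorem exists_gen_zero_ne_zero_of_stationary (hh0 : h 0 ≠ 0) (hπ : Summable π) (hπ0 : π 0 ≠ 0)
    (heq : gen h 0 * π 0 +
      gen a 0 * (∑' j : {j : Fin n → ℕ // j ≠ 0}, π j.1 * ∏ l, (0 : Fin n → ℝ) l ^ j.1 l) +
      ∑ k, gen (b k) 0 * S k = 0) : ∃ k, gen (b k) 0 ≠ 0 := by
  by_contra! hb
  rw [tsum_ne_zero_eq_gen_sub hπ (by simp)] at heq
  simp [gen_zero, hb, hh0, hπ0] at heq

theorem sum_div_mul_eq_of_stationary {u : Fin n → ℝ} {i0 : Fin n} (hB : gen (b i0) u ≠ 0)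
    (hπ : Summable π) (hu : ‖u‖ ≤ 1)
    (heq : gen h u * π 0 +
      gen a u * (∑' j : {j : Fin n → ℕ // j ≠ 0}, π j.1 * ∏ l, u l ^ j.1 l) +
      ∑ k, gen (b k) u * S k = 0) :
    ∑ k, gen (b k) u / gen (b i0) u * S k =
      π 0 * (-gen h u / gen (b i0) u) - gen a u / gen (b i0) u * (gen π u - π 0) := by
  rw [tsum_ne_zero_eq_gen_sub hπ hu] at heq
  simp only [div_mul_eq_mul_div, ← Finset.sum_div]
  field_simp
  linear_combination heq

theorem hasDerivAt_gen_sub_of_stationary {c : ℝ → Fin n → ℝ} {i0 : Fin n}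
    (hc : IsCharacteristicCurve b i0 c) {s : ℝ} (hs : s ∈ Ioo (0 : ℝ) 1) (hcs : ‖c s‖ < 1)
    (hπ : Summable π)
    (heq : gen h (c s) * π 0 +
      gen a (c s) * (∑' j : {j : Fin n → ℕ // j ≠ 0}, π j.1 * ∏ l, c s l ^ j.1 l) +
      ∑ k, gen (b k) (c s) * genPartial k π (c s) = 0) :
    HasDerivAt (fun r => gen π (c r) - π 0)
      (π 0 * (-gen h (c s) / gen (b i0) (c s)) -
        gen a (c s) / gen (b i0) (c s) * (gen π (c s) - π 0)) s :=
  ((hasDerivAt_gen_comp hπ hcs (hc.hasDerivAt hs)).sub_const _).congr_deriv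
    (sum_div_mul_eq_of_stationary (hc.gen_base_pos s hs).ne' hπ hcs.le heq)

end StationaryEquation

theorem stmt_11_general {n : ℕ} {h a π : (Fin n → ℕ) → ℝ} {b : Fin n → (Fin n → ℕ) → ℝ}
    {i0 : Fin n} {c : ℝ → Fin n → ℝ} (hh : Summable h) (hh0 : h 0 ≠ 0) (ha : Summable a)
    (hb : ∀ k, Summable (b k))
    (hdom : ∀ k, ∑' j : {j : Fin n → ℕ // j ≠ unitvec k}, |b k j.1| ≤ -b k (unitvec k))
    (hc : IsCharacteristicCurve b i0 c) (hπ : Summable π) (hπ0 : π 0 ≠ 0)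
    (heq : ∀ s ∈ Ico (0 : ℝ) 1,
      gen h (c s) * π 0 +
      gen a (c s) * (∑' j : {j : Fin n → ℕ // j ≠ 0}, π j.1 * ∏ l, c s l ^ j.1 l) +
      ∑ k, gen (b k) (c s) * genPartial k π (c s) = 0) :
    ∀ s ∈ Ico (0 : ℝ) 1, gen π (c s) = π 0 * (1 + ∫ y in (0 : ℝ)..s,
      -gen h (c y) / gen (b i0) (c y) *
        Real.exp (-∫ x in y..s, gen a (c x) / gen (b i0) (c x))) := by
  obtain ⟨k, hk⟩ := exists_gen_zero_ne_zero_of_stationary hh0 hπ hπ0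
    (hc.apply_zero ▸ heq 0 ⟨le_rfl, one_pos⟩)
  have h0 : 0 < gen (b i0) 0 := hc.gen_base_zero_pos hb hk
  have hB : ∀ s ∈ Ico (0 : ℝ) 1, gen (b i0) (c s) ≠ 0 :=
    fun s hs => (hc.gen_base_pos_of_zero h0 hs).ne'
  have hlt : ∀ s ∈ Ico (0 : ℝ) 1, ‖c s‖ < 1 := fun s hs => hc.norm_lt_one hb hdom h0 hs
  have hcont : ∀ {p : (Fin n → ℕ) → ℝ}, Summable p →
      ContinuousOn (fun s => gen p (c s)) (Ico 0 1) := hc.continuousOn_gen_comp hlt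
  intro s hs
  have hsub : Icc 0 s ⊆ Ico 0 1 := Icc_subset_Ico_right hs.2
  have hsol := eq_add_integral_of_hasDerivAt_sub_smul (f := fun y => gen π (c y) - π 0)
    (α := fun y => gen a (c y) / gen (b i0) (c y))
    (η := fun y => π 0 * (-gen h (c y) / gen (b i0) (c y))) hs.1
    (((hcont ha).div (hcont (hb i0)) hB).mono hsub)
    ((continuousOn_const.mul ((hcont hh).neg.div (hcont (hb i0)) hB)).mono hsub)
    (((hcont hπ).sub continuousOn_const).mono hsub)
    fun y hy => hasDerivAt_gen_sub_of_stationary hc ⟨hy.1, hy.2.trans hs.2⟩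
      (hlt y (hsub (Ioo_subset_Icc_self hy))) hπ (heq y (hsub (Ioo_subset_Icc_self hy)))
  simp only [hc.apply_zero, gen_zero, sub_self, smul_eq_mul, mul_left_comm _ (π 0),
    intervalIntegral.integral_const_mul, mul_comm (Real.exp _)] at hsol
  linear_combination hsol

/-- equilibrium distribution along the characteristic curve:
if the probability distribution `(π_j)` satisfies the stationary equation
along the curve `(s, u_2(s),…,u_n(s))`, then its generating function along
the curve is `π(s) = π_0 [1 + ∫_0^s (-H/B_1) e^{-∫_y^s A/B_1} dy]`. -/
theorem stmt_11 {n : ℕ} (hn : 0 < n) (h a : (Fin n → ℕ) → ℝ)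
    (b : Fin n → (Fin n → ℕ) → ℝ)
    (hhnn : ∀ j : Fin n → ℕ, j ≠ 0 → 0 ≤ h j)
    (hhsum : Summable h)
    (hhval : HasSum (fun j : {j : Fin n → ℕ // j ≠ 0} => h j.1) (-h 0))
    (hhpos : 0 < -h 0)
    (hann : ∀ j : Fin n → ℕ, j ≠ 0 → 0 ≤ a j)
    (hasum : Summable a)
    (haval : HasSum (fun j : {j : Fin n → ℕ // j ≠ 0} => a j.1) (-a 0))
    (hapos : 0 < -a 0)
    (hbnn : ∀ i j, j ≠ unitvec i → 0 ≤ b i j)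
    (hbsum : ∀ i, Summable (b i))
    (hbval : ∀ i, HasSum (fun j : {j : Fin n → ℕ // j ≠ unitvec i} => b i j.1)
      (-(b i (unitvec i))))
    (hbpos : ∀ i, 0 < -(b i (unitvec i)))
    (i0 : Fin n) (hi0 : i0 = ⟨0, hn⟩)
    -- the characteristic curve on `[0,1)`, with `B_1 > 0` along it
    (c : ℝ → Fin n → ℝ)
    (hci0 : ∀ s ∈ Ico (0:ℝ) 1, c s i0 = s)
    (hc0 : ∀ k, k ≠ i0 → c 0 k = 0)
    (hode : ∀ s ∈ Ico (0:ℝ) 1, ∀ k, k ≠ i0 →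
      HasDerivAt (fun r => c r k) (gen (b k) (c s) / gen (b i0) (c s)) s)
    (hB1pos : ∀ s ∈ Ioo (0:ℝ) 1, 0 < gen (b i0) (c s))
    -- `π` a probability distribution with positive weights
    (π : (Fin n → ℕ) → ℝ)
    (hπpos : ∀ j, 0 < π j)
    (hπ1 : HasSum π 1)
    -- the derivative sums `S_k(s) = ∑_j π_j j_k s^{j_1}⋯u_k(s)^{j_k-1}⋯`
    (S : Fin n → ℝ → ℝ)
    (hS : ∀ k, ∀ s ∈ Ico (0:ℝ) 1,
      HasSum (fun j : Fin n → ℕ =>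
        π j * (j k : ℝ) * ∏ l, c s l ^ (j l - if l = k then 1 else 0)) (S k s))
    -- the stationary equation (4.4) along the curve
    (heq : ∀ s ∈ Ico (0:ℝ) 1,
      gen h (c s) * π 0 +
      gen a (c s) * (∑' j : {j : Fin n → ℕ // j ≠ 0}, π j.1 * ∏ l, c s l ^ j.1 l) +
      ∑ k, gen (b k) (c s) * S k s = 0) :
    ∀ s ∈ Ico (0:ℝ) 1,
      (∑' j : Fin n → ℕ, π j * ∏ l, c s l ^ j l) =
        π 0 * (1 + ∫ y in (0:ℝ)..s,
          (-(gen h (c y))) / gen (b i0) (c y) *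
            Real.exp (-(∫ x in y..s, gen a (c x) / gen (b i0) (c x)))) := by
  have hc : IsCharacteristicCurve b i0 c := ⟨hci0, hc0, hode, hB1pos⟩
  have hdom : ∀ k, ∑' j : {j : Fin n → ℕ // j ≠ unitvec k}, |b k j.1| ≤ -b k (unitvec k) :=
    fun k => (tsum_congr fun j : {j : Fin n → ℕ // j ≠ unitvec k} =>
      abs_of_nonneg (hbnn k j.1 j.2)).trans_le (hbval k).tsum_eq.le
  have hSk : ∀ s ∈ Ico (0:ℝ) 1, ∀ k, S k s = genPartial k π (c s) :=
    fun s hs k => (hS k s hs).tsum_eq.symm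
  exact stmt_11_general hhsum (neg_pos.1 hhpos).ne hasum hbsum hdom hc hπ1.summable (hπpos 0).ne'
    fun s hs => by simpa only [hSk s hs] using heq s hs
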